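/- arXiv:1109.1633 — 9 statements merged into one kernel-verified Lean document; each statement's English description precedes it below -/
import Mathlib

section
/- There exists an absolute constant c > 0 such that for all integers a ≥ 2 and s ≥ 2 the following holds: let λ be the largest real root of the polynomial P_s, where P_s(x) = x³ − s·x² − s·x − s if s ≡ 0 (mod 8) and s ≥ 6; P_s(x) = x³ − (s+2)x² + (s+2)x − (s−2) if s ≡ 2 (mod 8) and s ≥ 6; P_s(x) = x³ − (s+2)x² + s·x + (s+4) if s ≡ 4 (mod 8) and s ≥ 6; P_s(x) = x³ − s·x² − (s+2)x + (s+2) if s ≡ 6 (mod 8) and s ≥ 6; P_s(x) = x² − 4x − 4 if s = 4; P_s(x) = x − 2 if s = 2; and P_s(x) = x − s − 1 if s is odd and s ≥ 3. Then there exists M such that for all m ≥ M, f(a^m, a^s) ≥ c · s^{−log₂(s+1) − 3} · m^{log₂ λ}. -/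
/-!
The proof rests on the folding lemma: if `w ++ [b]` has continuant `d`, then
`w ++ [b, x - 1, 1, b - 1] ++ w.reverse` and its reverse have continuant `x * d ^ 2`
(`continuant_fold`). Taking `x = a ^ j` with `0 ≤ j ≤ s`, a sequence for `a ^ k` yields two
sequences for `a ^ (2 * k + j)`. The value `j = s` is allowed because only `x - 1` occurs as an
entry. In the class `foldSet` of sequences with end entries in `[2, a ^ s - 2]` the entries stay
below `a ^ s`, and a folded sequence determines what it was folded from: its two halves, read
from the outside, agree exactly along `w`. Hence the number `V m` of such sequences satisfies
`V m ≥ 2 * ∑ V ((m - j) / 2)` over the `j ≤ s` with the parity of `m` (`foldCount_rec`), and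
explicit seeds give `V m ≥ 1` for all `m ≥ 6` (`foldCount_pos`).

If `w` is a positive weight with `lam * w m ≤ 2 * ∑ w ((m - j) / 2)`, induction on `m` gives
`V m ≥ C * w m * (m + s) ^ logb 2 lam` (`growth`). For odd `s`, and for `s = 2`, constant weights
suffice. For the other even `s` the weight depends on `m` modulo 4: replacing the one uncontrolled
term of each window of consecutive integers by the least possible weight leaves a linear system
with three unknowns, whose characteristic polynomial is `P_s`, and `w` is its eigenvector for
`lam` (for `s = 4` the cubic of the residue class 4 modulo 8 is `(x - 2) * (x ^ 2 - 4 * x - 4)`).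
-/

/-- The continuant of a finite sequence of positive integers. -/
def continuant : List ℕ → ℕ
  | [] => 1
  | [a] => a
  | a :: b :: t => a * continuant (b :: t) + continuant t

/-- `f d N` is the number of finite sequences of positive integers, all entries `< N`,
whose continuant equals `d`. -/
noncomputable def f (d N : ℕ) : ℕ :=
  Set.ncard {l : List ℕ | (∀ x ∈ l, 0 < x ∧ x < N) ∧ continuant l = d}

/-- `lam` is the largest real root of the real function `p`. -/
def IsGreatestRoot (p : ℝ → ℝ) (lam : ℝ) : Prop :=
  p lam = 0 ∧ ∀ x : ℝ, p x = 0 → x ≤ lam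

/-- The polynomial `P_s` from the paper, as a real function. -/
noncomputable def Ps (s : ℕ) (x : ℝ) : ℝ :=
  if s % 2 = 1 then x - (s : ℝ) - 1
  else if s = 2 then x - 2
  else if s = 4 then x ^ 2 - 4 * x - 4
  else if s % 8 = 0 then x ^ 3 - (s : ℝ) * x ^ 2 - (s : ℝ) * x - (s : ℝ)
  else if s % 8 = 2 then
    x ^ 3 - ((s : ℝ) + 2) * x ^ 2 + ((s : ℝ) + 2) * x - ((s : ℝ) - 2)
  else if s % 8 = 4 then
    x ^ 3 - ((s : ℝ) + 2) * x ^ 2 + (s : ℝ) * x + ((s : ℝ) + 4)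
  else x ^ 3 - (s : ℝ) * x ^ 2 - ((s : ℝ) + 2) * x + ((s : ℝ) + 2)

/-! ### Continuants as matrix products -/

/-- The elementary matrix `[[a, 1], [1, 0]]`; a product of these has the continuant of the
sequence of upper-left entries as its top-left entry. -/
def stepMat (a : ℕ) : Matrix (Fin 2) (Fin 2) ℤ := !![(a : ℤ), 1; 1, 0]

/-- The product of the elementary matrices of the entries of a list. -/
def contMat (l : List ℕ) : Matrix (Fin 2) (Fin 2) ℤ := (l.map stepMat).prod

lemma contMat_cons (a : ℕ) (l : List ℕ) : contMat (a :: l) = stepMat a * contMat l := by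
  simp [contMat]

lemma contMat_append (l k : List ℕ) : contMat (l ++ k) = contMat l * contMat k := by
  simp [contMat]

lemma contMat_reverse (l : List ℕ) : contMat l.reverse = (contMat l).transpose := by
  induction l with
  | nil => simp [contMat]
  | cons a l ih =>
    have h : (stepMat a).transpose = stepMat a := by
      ext i j; fin_cases i <;> fin_cases j <;> simp [stepMat]
    rw [List.reverse_cons, contMat_append, ih, contMat_cons a l, Matrix.transpose_mul, h]
    simp [contMat]

lemma contMat_cons_zero (a : ℕ) (l : List ℕ) :
    contMat (a :: l) 0 0 = a * contMat l 0 0 + contMat l 1 0 := by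
  simp [contMat_cons, stepMat, Matrix.mul_apply, Fin.sum_univ_two]

lemma contMat_cons_one (a : ℕ) (l : List ℕ) : contMat (a :: l) 1 0 = contMat l 0 0 := by
  simp [contMat_cons, stepMat, Matrix.mul_apply, Fin.sum_univ_two]

lemma contMat_zero_zero : ∀ l : List ℕ, contMat l 0 0 = (continuant l : ℤ)
  | [] => by simp [contMat, continuant]
  | [a] => by simp [contMat, continuant, stepMat]
  | a :: b :: t => by
    rw [contMat_cons_zero, contMat_cons_one, contMat_zero_zero (b :: t), contMat_zero_zero t]
    simp [continuant]

/-! ### The folding lemma -/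

/-- The block placed between `w` and `w.reverse` when `w ++ [b]` is folded at `x = a ^ j`.
The two values of the Boolean give mutually reversed blocks. For `x = 1` the block
`[b, 0, 1, b - 1]` contains a zero entry and is contracted to `[b + 1, b - 1]`. -/
def foldMid (a : ℕ) (e : Bool) (j b : ℕ) : List ℕ :=
  match e, j with
  | true, 0 => [b + 1, b - 1]
  | false, 0 => [b - 1, b + 1]
  | true, j + 1 => [b, a ^ (j + 1) - 1, 1, b - 1]
  | false, j + 1 => [b - 1, 1, a ^ (j + 1) - 1, b]

/-- Folding lemma: the folded sequence has continuant `a ^ j` times the square of the continuant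
of `w ++ [b]`, because the block represents the quadratic form `a ^ j * (b * p + q) ^ 2`. -/
lemma continuant_fold (a : ℕ) (ha : 1 ≤ a) (e : Bool) (j b : ℕ) (hb : 1 ≤ b) (w : List ℕ) :
    continuant (w ++ foldMid a e j b ++ w.reverse) = a ^ j * continuant (w ++ [b]) ^ 2 := by
  have key : (continuant (w ++ foldMid a e j b ++ w.reverse) : ℤ)
      = a ^ j * (continuant (w ++ [b]) : ℤ) ^ 2 := by
    rw [← contMat_zero_zero, ← contMat_zero_zero, contMat_append, contMat_append,
      contMat_append, contMat_reverse]
    generalize contMat w = W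
    have hb' : ((b - 1 : ℕ) : ℤ) = b - 1 := by push_cast [hb]; ring
    have hx : ((a ^ j - 1 : ℕ) : ℤ) = (a : ℤ) ^ j - 1 := by
      push_cast [Nat.one_le_pow j a ha]; ring
    rcases e with _ | _ <;> rcases j with _ | j <;>
      simp [foldMid, contMat, stepMat, Matrix.mul_apply, Fin.sum_univ_two, hb', hx] <;> ring
  exact_mod_cast key

/-- A list `p ++ q.reverse` with `p`, `q` of equal length determines its two halves. -/
lemma halves_inj {p q p' q' : List ℕ} (h : p.length = q.length) (h' : p'.length = q'.length)
    (e : p ++ q.reverse = p' ++ q'.reverse) : p = p' ∧ q = q' := by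
  have hl := congrArg List.length e
  simp only [List.length_append, List.length_reverse] at hl
  have := List.append_inj e (by omega)
  exact ⟨this.1, List.reverse_injective this.2⟩

/-- The first half of the folding block. -/
def foldLeft (a : ℕ) (e : Bool) (j b : ℕ) : List ℕ :=
  match e, j with
  | true, 0 => [b + 1]
  | false, 0 => [b - 1]
  | true, j + 1 => [b, a ^ (j + 1) - 1]
  | false, _ + 1 => [b - 1, 1]

/-- The second half of the folding block is the reverse of the first half of the opposite one:
the halves of a folded list agree on `w` and then differ by `±1` or `±2`. -/
lemma fold_eq_halves (a : ℕ) (e : Bool) (j b : ℕ) (w : List ℕ) :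
    w ++ foldMid a e j b ++ w.reverse
      = (w ++ foldLeft a e j b) ++ (w ++ foldLeft a (!e) j b).reverse := by
  rcases e with _ | _ <;> rcases j with _ | j <;> simp [foldMid, foldLeft]

lemma foldLeft_inj (a : ℕ) (ha : 2 ≤ a) {e e' : Bool} {j j' b b' : ℕ} {w w' : List ℕ}
    (hb : 2 ≤ b) (hb' : 2 ≤ b')
    (h1 : w ++ foldLeft a e j b = w' ++ foldLeft a e' j' b')
    (h2 : w ++ foldLeft a (!e) j b = w' ++ foldLeft a (!e') j' b') :
    e = e' ∧ j = j' ∧ b = b' ∧ w = w' := by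
  have hpow : ∀ i k : ℕ, a ^ (i + 1) - 1 = a ^ (k + 1) - 1 → i = k := by
    intro i k h
    have := Nat.one_le_pow (i + 1) a (by omega)
    have := Nat.one_le_pow (k + 1) a (by omega)
    have := Nat.pow_right_injective ha (by omega : a ^ (i + 1) = a ^ (k + 1))
    omega
  have e1 : ∀ (u v : List ℕ) (x y : ℕ), u ++ [x] = v ++ [y] → u = v ∧ x = y := by
    intro u v x y h
    simpa using List.append_inj' h rfl
  have e2 : ∀ (u v : List ℕ) (x y z t : ℕ), u ++ [x, y] = v ++ [z, t] → u = v ∧ x = z ∧ y = t := by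
    intro u v x y z t h
    simpa using List.append_inj' h rfl
  have e3 : ∀ (u v : List ℕ) (x y z : ℕ), u ++ [x, y] = v ++ [z] → v = u ++ [x] := by
    intro u v x y z h
    have : (u ++ [x]) ++ [y] = v ++ [z] := by simpa using h
    exact (e1 _ _ _ _ this).1.symm
  rcases e with _ | _ <;> rcases e' with _ | _ <;> rcases j with _ | j <;>
    rcases j' with _ | j' <;> simp only [foldLeft, Bool.not_true, Bool.not_false] at h1 h2
  all_goals first
    | (have r1 := e1 _ _ _ _ h1; have r2 := e1 _ _ _ _ h2
       obtain ⟨rfl, r1⟩ := r1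
       obtain ⟨-, r2⟩ := r2
       first | (exfalso; omega) | (refine ⟨rfl, rfl, by omega, rfl⟩))
    | (have r1 := e2 _ _ _ _ _ _ h1; have r2 := e2 _ _ _ _ _ _ h2
       obtain ⟨rfl, r1, r3⟩ := r1
       obtain ⟨-, r2, r4⟩ := r2
       first | (exfalso; omega)
             | (refine ⟨rfl, by rw [hpow _ _ r3], by omega, rfl⟩)
             | (refine ⟨rfl, by rw [hpow _ _ r4], by omega, rfl⟩))
    | (exfalso
       have r1 := e3 _ _ _ _ _ h1; have r2 := e3 _ _ _ _ _ h2
       rw [r1] at r2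
       have := (e1 _ _ _ _ r2).2
       omega)
    | (exfalso
       have r1 := e3 _ _ _ _ _ h1.symm; have r2 := e3 _ _ _ _ _ h2.symm
       rw [r1] at r2
       have := (e1 _ _ _ _ r2).2
       omega)

/-! ### Finiteness, and the class stable under folding -/

lemma length_le_continuant : ∀ l : List ℕ, (∀ x ∈ l, 0 < x) →
    l.length ≤ continuant l ∧ 0 < continuant l
  | [], _ => by simp [continuant]
  | [a], h => by
    have := h a (by simp)
    simp only [continuant, List.length_singleton]; omega
  | a :: b :: t, h => by
    have h1 := length_le_continuant (b :: t) (fun x hx => h x (by simp [hx]))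
    have h2 := length_le_continuant t (fun x hx => h x (by simp [hx]))
    have ha := h a (by simp)
    simp only [continuant, List.length_cons] at *
    constructor <;> nlinarith

lemma finite_lists (d N : ℕ) :
    {l : List ℕ | (∀ x ∈ l, 0 < x ∧ x < N) ∧ continuant l = d}.Finite := by
  refine Set.Finite.subset (s := (List.map Fin.val) '' {l : List (Fin N) | l.length ≤ d})
    ((List.finite_length_le (Fin N) d).image _) ?_
  rintro l ⟨hl, hd⟩
  refine ⟨l.pmap (fun x hx => (⟨x, hx⟩ : Fin N)) (fun x hx => (hl x hx).2), ?_, ?_⟩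
  · have := (length_le_continuant l (fun x hx => (hl x hx).1)).1
    simp only [Set.mem_ofPred_eq, List.length_pmap]; omega
  · simp [List.map_pmap]

/-- Sequences `c, t, b` (stored as a triple) with continuant `a ^ m` and entries in
`[1, a ^ s - 1]` whose end entries `c`, `b` lie in `[2, a ^ s - 2]`. The condition on the ends
makes this class stable under folding. -/
def foldSet (a s m : ℕ) : Set (ℕ × List ℕ × ℕ) :=
  {p | (2 ≤ p.1 ∧ p.1 + 2 ≤ a ^ s) ∧ (2 ≤ p.2.2 ∧ p.2.2 + 2 ≤ a ^ s) ∧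
    (∀ x ∈ p.2.1, 0 < x ∧ x < a ^ s) ∧ continuant (p.1 :: (p.2.1 ++ [p.2.2])) = a ^ m}

/-- The number of sequences in the class `foldSet`. -/
noncomputable def foldCount (a s m : ℕ) : ℕ := (foldSet a s m).ncard

lemma triple_injective :
    Function.Injective (fun p : ℕ × List ℕ × ℕ => p.1 :: (p.2.1 ++ [p.2.2])) := by
  rintro ⟨c, t, b⟩ ⟨c', t', b'⟩ h
  simp only [List.cons.injEq] at h
  obtain ⟨rfl, h⟩ := h
  have := List.append_inj' h rfl
  simp at this
  simp [this]

lemma foldSet_mapsTo (a s m : ℕ) :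
    Set.MapsTo (fun p : ℕ × List ℕ × ℕ => p.1 :: (p.2.1 ++ [p.2.2])) (foldSet a s m)
      {l : List ℕ | (∀ x ∈ l, 0 < x ∧ x < a ^ s) ∧ continuant l = a ^ m} := by
  rintro ⟨c, t, b⟩ ⟨h1, h2, h3, h4⟩
  simp only at h1 h2 h3 h4
  refine ⟨?_, h4⟩
  intro x hx
  simp only [List.mem_cons, List.mem_append, List.not_mem_nil, or_false] at hx
  rcases hx with rfl | hx | rfl
  · omega
  · exact h3 x hx
  · omega

lemma foldSet_finite (a s m : ℕ) : (foldSet a s m).Finite :=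
  Set.Finite.of_injOn (foldSet_mapsTo a s m) triple_injective.injOn (finite_lists _ _)

lemma foldCount_le_f (a s m : ℕ) : foldCount a s m ≤ f (a ^ m) (a ^ s) :=
  Set.ncard_le_ncard_of_injOn _ (foldSet_mapsTo a s m) triple_injective.injOn (finite_lists _ _)

/-- Folding a triple about its last entry. -/
def foldTriple (a : ℕ) (e : Bool) (j : ℕ) (p : ℕ × List ℕ × ℕ) : ℕ × List ℕ × ℕ :=
  (p.1, p.2.1 ++ foldMid a e j p.2.2 ++ p.2.1.reverse, p.1)

lemma foldTriple_mem {a s k j : ℕ} (ha : 2 ≤ a) (hj : j ≤ s) (e : Bool)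
    {p : ℕ × List ℕ × ℕ} (hp : p ∈ foldSet a s k) :
    foldTriple a e j p ∈ foldSet a s (2 * k + j) := by
  obtain ⟨c, t, b⟩ := p
  obtain ⟨h1, h2, h3, h4⟩ := hp
  simp only at h1 h2 h3 h4
  refine ⟨h1, h1, ?_, ?_⟩
  · intro x hx
    simp only [foldTriple, List.mem_append, List.mem_reverse] at hx
    have hmid : ∀ x ∈ foldMid a e j b, 0 < x ∧ x < a ^ s := by
      have hle : a ^ j ≤ a ^ s := Nat.pow_le_pow_right (by omega) hj
      intro x hx
      rcases j with _ | j
      · rcases e with _ | _ <;> simp [foldMid] at hx <;> omega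
      · have : 2 ≤ a ^ (j + 1) := le_trans ha (Nat.le_self_pow (by omega) a)
        rcases e with _ | _ <;> simp [foldMid] at hx <;> omega
    rcases hx with (hx | hx) | hx
    · exact h3 x hx
    · exact hmid x hx
    · exact h3 x hx
  · have := continuant_fold a (by omega) e j b (by omega) (c :: t)
    simp only [List.cons_append] at this
    rw [h4] at this
    simp only [foldTriple]
    have e1 : c :: (t ++ foldMid a e j b ++ t.reverse ++ [c])
        = c :: (t ++ foldMid a e j b ++ (c :: t).reverse) := by simp
    rw [e1, this]
    ring

lemma foldTriple_inj {a : ℕ} (ha : 2 ≤ a) {e e' : Bool} {j j' : ℕ} {p p' : ℕ × List ℕ × ℕ}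
    (hp : 2 ≤ p.2.2) (hp' : 2 ≤ p'.2.2) (h : foldTriple a e j p = foldTriple a e' j' p') :
    e = e' ∧ j = j' ∧ p = p' := by
  obtain ⟨c, t, b⟩ := p
  obtain ⟨c', t', b'⟩ := p'
  simp only [foldTriple, Prod.mk.injEq] at h hp hp'
  obtain ⟨rfl, h, -⟩ := h
  rw [fold_eq_halves, fold_eq_halves] at h
  have len : ∀ (w : List ℕ) (e : Bool) (j b : ℕ),
      (w ++ foldLeft a e j b).length = (w ++ foldLeft a (!e) j b).length := by
    intro w e j b
    rcases e with _ | _ <;> rcases j with _ | j <;> simp [foldLeft]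
  obtain ⟨h1, h2⟩ := halves_inj (len _ _ _ _) (len _ _ _ _) h
  obtain ⟨r1, r2, r3, r4⟩ := foldLeft_inj a ha hp hp' h1 h2
  simp [r1, r2, r3, r4]

/-- The number of `j ≤ s` with the parity of `m`. -/
def numFolds (s m : ℕ) : ℕ := (s + 2 - m % 2) / 2

/-- Every sequence for `m / 2 - i` folds, at the exponent `j = m % 2 + 2 * i`, to two sequences
for `m`, and all the sequences so obtained are distinct. -/
lemma foldCount_rec {a s m : ℕ} (ha : 2 ≤ a) (hm : s ≤ m) :
    2 * ∑ i ∈ Finset.range (numFolds s m), foldCount a s (m / 2 - i) ≤ foldCount a s m := by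
  classical
  let S : ℕ → Finset (ℕ × List ℕ × ℕ) := fun k => (foldSet_finite a s k).toFinset
  have hS : ∀ k, foldCount a s k = (S k).card := fun k =>
    Set.ncard_eq_toFinset_card _ (foldSet_finite a s k)
  have hmem : ∀ k p, p ∈ S k ↔ p ∈ foldSet a s k := fun k p => by simp [S]
  let D : Finset (Σ _ : Bool × ℕ, ℕ × List ℕ × ℕ) :=
    ((Finset.univ : Finset Bool) ×ˢ Finset.range (numFolds s m)).sigma (fun q => S (m / 2 - q.2))
  have hD : D.card = 2 * ∑ i ∈ Finset.range (numFolds s m), foldCount a s (m / 2 - i) := by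
    simp only [D, Finset.card_sigma, Finset.sum_product, hS]
    simp
  rw [← hD, hS]
  refine Finset.card_le_card_of_injOn (fun q => foldTriple a q.1.1 (m % 2 + 2 * q.1.2) q.2) ?_ ?_
  · rintro ⟨⟨e, i⟩, p⟩ hq
    simp only [D, Finset.coe_sigma, Set.mem_sigma_iff, Finset.mem_coe, Finset.mem_product,
      Finset.mem_range, hmem, numFolds] at hq ⊢
    have := foldTriple_mem (j := m % 2 + 2 * i) ha (by omega) e hq.2
    rwa [show 2 * (m / 2 - i) + (m % 2 + 2 * i) = m by omega] at this
  · rintro ⟨⟨e, i⟩, p⟩ hq ⟨⟨e', i'⟩, p'⟩ hq' h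
    simp only [D, Finset.coe_sigma, Set.mem_sigma_iff, Finset.mem_coe, hmem] at hq hq'
    obtain ⟨r1, r2, r3⟩ := foldTriple_inj ha hq.2.2.1.1 hq'.2.2.1.1 h
    have r2' : m % 2 + 2 * i = m % 2 + 2 * i' := r2
    have : i = i' := by omega
    subst r1 this r3
    rfl

lemma foldCount_pos_iff {a s m : ℕ} : 1 ≤ foldCount a s m ↔ (foldSet a s m).Nonempty := by
  rw [foldCount, Nat.one_le_iff_ne_zero, ← Nat.pos_iff_ne_zero,
    Set.ncard_pos (foldSet_finite a s m)]

lemma nonempty_fold {a s k : ℕ} (ha : 2 ≤ a) (j : ℕ) (hj : j ≤ s)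
    (h : (foldSet a s k).Nonempty) : (foldSet a s (2 * k + j)).Nonempty :=
  h.elim fun _ hp => ⟨_, foldTriple_mem ha hj true hp⟩

/-- Seeds `[a, a ^ j - 1, 1, a - 1]` (and `[2, 2 ^ j - 1, 2]` for `a = 2`), obtained by folding
the one-term sequence `[a]`. -/
lemma nonempty_seed {a s j : ℕ} (ha : 2 ≤ a) (hs : 2 ≤ s) (hj1 : 1 ≤ j) (hj : j ≤ s) :
    (foldSet a s (j + 2)).Nonempty := by
  have hle : a ^ j ≤ a ^ s := Nat.pow_le_pow_right (by omega) hj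
  have h2 : a ^ 2 ≤ a ^ s := Nat.pow_le_pow_right (by omega) hs
  have h3 : 2 ≤ a ^ j := le_trans ha (Nat.le_self_pow (by omega) a)
  have h4 : a + 2 ≤ a ^ 2 := by nlinarith
  obtain ⟨y, hy⟩ : ∃ y, a ^ j = y + 1 := ⟨a ^ j - 1, by omega⟩
  rcases Nat.lt_or_ge a 3 with h | h
  · obtain rfl : a = 2 := by omega
    refine ⟨(2, [2 ^ j - 1], 2), by simp; omega, by simp; omega, by simp; omega, ?_⟩
    simp only [List.cons_append, List.nil_append, continuant, pow_add, hy]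
    simp; ring
  · refine ⟨(a, [a ^ j - 1, 1], a - 1), by simp; omega, by simp; omega, by simp; omega, ?_⟩
    obtain ⟨z, rfl⟩ : ∃ z, a = z + 1 := ⟨a - 1, by omega⟩
    simp only [List.cons_append, List.nil_append, continuant, pow_add, hy]
    simp; ring

/-- The class is non-empty for every exponent `m ≥ 6`. Only `a = s = 2` needs an ad hoc sequence,
for `m = 11`: the class is then empty for `m = 5`, and `11` arises by folding only from `5`. -/
lemma foldCount_pos {a s : ℕ} (ha : 2 ≤ a) (hs : 2 ≤ s) : ∀ m, 6 ≤ m → 1 ≤ foldCount a s m := by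
  have hh : ∀ m, (foldSet a s (m / 2)).Nonempty → (foldSet a s m).Nonempty := by
    intro m h
    have := nonempty_fold ha (m % 2) (by omega) h
    rwa [Nat.div_add_mod] at this
  have s3 : (foldSet a s 3).Nonempty := nonempty_seed ha hs le_rfl (by omega)
  have s4 : (foldSet a s 4).Nonempty := nonempty_seed (j := 2) ha hs (by omega) (by omega)
  have s10 : (foldSet a s 10).Nonempty := nonempty_fold (k := 4) ha 2 hs s4
  have s11 : (foldSet a s 11).Nonempty := by
    by_cases h2 : a = 2 ∧ s = 2
    · obtain ⟨rfl, rfl⟩ := h2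
      refine ⟨(2, [1, 1, 2, 3, 3, 1, 1, 2], 2), by simp, by simp, by simp, by simp [continuant]⟩
    · apply hh; show (foldSet a s 5).Nonempty
      by_cases h3 : s = 2
      · apply hh; show (foldSet a s 2).Nonempty
        have h4 : a ^ 2 ≤ a ^ s := Nat.pow_le_pow_right (by omega) hs
        obtain ⟨z, rfl⟩ : ∃ z, a = z + 3 := ⟨a - 3, by omega⟩
        have h5 : (z + 4) + 2 ≤ (z + 3) ^ 2 := by nlinarith
        refine ⟨(z + 2, [], z + 4), by simp; omega, by simp; omega, by simp, ?_⟩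
        simp [continuant]; ring
      · exact nonempty_seed (j := 3) ha hs (by omega) (by omega)
  intro m hm
  rw [foldCount_pos_iff]
  induction m using Nat.strong_induction_on with
  | _ m ih =>
    by_cases h12 : 12 ≤ m
    · exact hh m (ih (m / 2) (by omega) (by omega))
    · have : m = 6 ∨ m = 7 ∨ m = 8 ∨ m = 9 ∨ m = 10 ∨ m = 11 := by omega
      rcases this with rfl | rfl | rfl | rfl | rfl | rfl
      · exact hh 6 s3
      · exact hh 7 s3
      · exact hh 8 s4
      · exact hh 9 s4
      · exact s10
      · exact s11

/-! ### Growth of the recursion -/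

/-- If a bounded nonnegative weight `w` grows by a factor of at least `lam` under the folding recursion, then
the count grows at least like `w m * (m + s) ^ logb 2 lam`. The shift by `s` is what makes the
induction close, since `(m - j) / 2 + s ≥ (m + s) / 2` for `j ≤ s`. -/
lemma growth {a s : ℕ} (ha : 2 ≤ a) (hs : 2 ≤ s) {lam : ℝ} (hlam : 1 ≤ lam) {w : ℕ → ℝ}
    {U : ℝ} (hU : 0 < U) (hw0 : ∀ m, 0 ≤ w m) (hwU : ∀ m, w m ≤ U)
    (hw : ∀ m, 12 + s ≤ m →
      lam * w m ≤ 2 * ∑ i ∈ Finset.range (numFolds s m), w (m / 2 - i)) :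
    ∀ m, 6 ≤ m →
      w m * ((m + s : ℝ) ^ Real.logb 2 lam) ≤
        U * ((12 + 2 * s : ℝ) ^ Real.logb 2 lam) * foldCount a s m := by
  set α := Real.logb 2 lam with hα
  have hα0 : 0 ≤ α := Real.logb_nonneg (by norm_num) hlam
  have h2α : (2 : ℝ) ^ α = lam := Real.rpow_logb (by norm_num) (by norm_num) (by linarith)
  intro m
  induction m using Nat.strong_induction_on with
  | _ m ih =>
    intro hm
    have hs0 : (0 : ℝ) ≤ s := Nat.cast_nonneg s
    have hm0 : (0 : ℝ) ≤ m := Nat.cast_nonneg m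
    by_cases hbig : 12 + s ≤ m
    · have hrec : (2 : ℝ) * ∑ i ∈ Finset.range (numFolds s m), (foldCount a s (m / 2 - i) : ℝ)
          ≤ foldCount a s m := by
        exact_mod_cast foldCount_rec (s := s) (m := m) ha (by omega)
      have hX : 0 ≤ U * ((12 + 2 * s : ℝ) ^ α) := by positivity
      have hterm : ∀ i ∈ Finset.range (numFolds s m),
          w (m / 2 - i) * (((m + s : ℝ) / 2) ^ α)
            ≤ U * ((12 + 2 * s : ℝ) ^ α) * foldCount a s (m / 2 - i) := by
        intro i hi
        rw [Finset.mem_range, numFolds] at hi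
        refine le_trans ?_ (ih (m / 2 - i) (by omega) (by omega))
        refine mul_le_mul_of_nonneg_left ?_ (hw0 _)
        refine Real.rpow_le_rpow (by positivity) ?_ hα0
        have : m + s ≤ 2 * ((m / 2 - i) + s) := by omega
        have : (m + s : ℝ) ≤ 2 * (((m / 2 - i : ℕ) : ℝ) + s) := by exact_mod_cast this
        linarith
      have hsum := Finset.sum_le_sum hterm
      rw [← Finset.sum_mul, ← Finset.mul_sum] at hsum
      have hsplit : (m + s : ℝ) ^ α = lam * ((m + s : ℝ) / 2) ^ α := by
        rw [Real.div_rpow (by positivity) (by norm_num), h2α]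
        field_simp
      have hY : 0 ≤ ((m + s : ℝ) / 2) ^ α := by positivity
      calc w m * ((m + s : ℝ) ^ α) = (lam * w m) * ((m + s : ℝ) / 2) ^ α := by
            rw [hsplit]; ring
        _ ≤ (2 * ∑ i ∈ Finset.range (numFolds s m), w (m / 2 - i)) * ((m + s : ℝ) / 2) ^ α :=
            mul_le_mul_of_nonneg_right (hw m hbig) hY
        _ ≤ 2 * (U * ((12 + 2 * s : ℝ) ^ α) *
              ∑ i ∈ Finset.range (numFolds s m), (foldCount a s (m / 2 - i) : ℝ)) := by
            linarith
        _ ≤ U * ((12 + 2 * s : ℝ) ^ α) * foldCount a s m := by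
            have := mul_le_mul_of_nonneg_left hrec hX
            linarith
    · have h1 : (1 : ℝ) ≤ foldCount a s m := by exact_mod_cast foldCount_pos ha hs m hm
      have hle : (m + s : ℝ) ^ α ≤ (12 + 2 * s : ℝ) ^ α := by
        refine Real.rpow_le_rpow (by positivity) ?_ hα0
        have : m + s ≤ 12 + 2 * s := by omega
        exact_mod_cast this
      calc w m * ((m + s : ℝ) ^ α) ≤ U * ((12 + 2 * s : ℝ) ^ α) :=
            mul_le_mul (hwU m) hle (by positivity) hU.le
        _ ≤ _ := le_mul_of_one_le_right (by positivity) h1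

/-- The growth estimate with its constant made explicit; the condition `U ≤ 4 * w m` bounds the
ratio of the largest to the smallest weight. -/
lemma f_lower_bound {a s : ℕ} (ha : 2 ≤ a) (hs : 2 ≤ s) {lam : ℝ} (hlam : 1 ≤ lam)
    (hlam' : lam ≤ s + 1) {w : ℕ → ℝ} {U : ℝ} (hU : 0 < U) (hwU : ∀ m, w m ≤ U)
    (hUw : ∀ m, U ≤ 4 * w m)
    (hw : ∀ m, 12 + s ≤ m →
      lam * w m ≤ 2 * ∑ i ∈ Finset.range (numFolds s m), w (m / 2 - i)) :
    ∀ m : ℕ, 6 ≤ m →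
      1 / 32 * (s : ℝ) ^ (-(Real.logb 2 ((s : ℝ) + 1)) - 3) * (m : ℝ) ^ (Real.logb 2 lam)
        ≤ (f (a ^ m) (a ^ s) : ℝ) := by
  intro m hm
  have hg := growth ha hs hlam hU (fun m => by linarith [hUw m]) hwU hw m hm
  have hf : (foldCount a s m : ℝ) ≤ f (a ^ m) (a ^ s) := by exact_mod_cast foldCount_le_f a s m
  refine le_trans ?_ hf
  set α := Real.logb 2 lam with hα
  set β := Real.logb 2 ((s : ℝ) + 1) with hβ
  have hs2 : (2 : ℝ) ≤ s := by exact_mod_cast hs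
  have hα0 : 0 ≤ α := Real.logb_nonneg (by norm_num) hlam
  have hαβ : α ≤ β := Real.logb_le_logb_of_le (by norm_num) (by linarith) hlam'
  have hβ0 : 0 ≤ β := hα0.trans hαβ
  have h2β : (2 : ℝ) ^ β = s + 1 := Real.rpow_logb (by norm_num) (by norm_num) (by linarith)
  -- `12 + 2 s ≤ 8 s` and `8 ^ β = (s + 1) ^ 3 ≤ 8 s ^ 3`
  have hconst : (12 + 2 * s : ℝ) ^ α ≤ 8 * (s : ℝ) ^ (β + 3) := by
    calc (12 + 2 * s : ℝ) ^ α ≤ (12 + 2 * s : ℝ) ^ β :=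
          Real.rpow_le_rpow_of_exponent_le (by linarith) hαβ
      _ ≤ (2 ^ 3 * s : ℝ) ^ β := Real.rpow_le_rpow (by linarith) (by linarith) hβ0
      _ = ((s : ℝ) + 1) ^ 3 * (s : ℝ) ^ β := by
          have h8 : ((2 : ℝ) ^ 3) ^ β = ((s : ℝ) + 1) ^ 3 := by
            rw [← Real.rpow_natCast, ← Real.rpow_mul (by norm_num), mul_comm ((3 : ℕ) : ℝ) β,
              Real.rpow_mul (by norm_num), h2β, Real.rpow_natCast]
          rw [Real.mul_rpow (by norm_num) (by linarith), h8]
      _ ≤ (2 * s : ℝ) ^ 3 * (s : ℝ) ^ β := by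
          refine mul_le_mul_of_nonneg_right ?_ (by positivity)
          exact pow_le_pow_left₀ (by linarith) (by linarith) 3
      _ = 8 * (s : ℝ) ^ (β + 3) := by
          rw [Real.rpow_add (by linarith), show (3 : ℝ) = ((3 : ℕ) : ℝ) by norm_num,
            Real.rpow_natCast]
          ring
  have hY : (0 : ℝ) ≤ (m : ℝ) ^ α := by positivity
  have hmα : (m : ℝ) ^ α ≤ (m + s : ℝ) ^ α :=
    Real.rpow_le_rpow (by positivity) (by linarith) hα0
  have hsp : (0 : ℝ) < (s : ℝ) ^ (β + 3) := by positivity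
  have h1 : U * (m : ℝ) ^ α ≤ U * (4 * (8 * (s : ℝ) ^ (β + 3)) * foldCount a s m) := by
    calc U * (m : ℝ) ^ α ≤ 4 * w m * (m : ℝ) ^ α := mul_le_mul_of_nonneg_right (hUw m) hY
      _ ≤ 4 * w m * (m + s : ℝ) ^ α :=
          mul_le_mul_of_nonneg_left hmα (by linarith [hUw m])
      _ = 4 * (w m * (m + s : ℝ) ^ α) := by ring
      _ ≤ 4 * (U * ((12 + 2 * s : ℝ) ^ α) * foldCount a s m) := by linarith
      _ ≤ 4 * (U * (8 * (s : ℝ) ^ (β + 3)) * foldCount a s m) := by gcongr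
      _ = _ := by ring
  have h2 := le_of_mul_le_mul_left h1 hU
  have hexp : (s : ℝ) ^ (-β - 3) = ((s : ℝ) ^ (β + 3))⁻¹ := by
    rw [← Real.rpow_neg (by linarith)]; ring_nf
  rw [hexp, mul_assoc, ← div_eq_inv_mul]
  rw [show 4 * (8 * (s : ℝ) ^ (β + 3)) * foldCount a s m
    = 32 * (foldCount a s m) * (s : ℝ) ^ (β + 3) by ring, ← div_le_iff₀ hsp] at h2
  linarith

/-! ### Weights of period four -/

/-- The function on `ℕ` of period four with the given values at `0, 1, 2, 3`. -/
noncomputable def perWeight (w0 w1 w2 w3 : ℝ) (m : ℕ) : ℝ :=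
  if m % 4 = 0 then w0 else if m % 4 = 1 then w1 else if m % 4 = 2 then w2 else w3

lemma perWeight_cases {P : ℝ → Prop} {w0 w1 w2 w3 : ℝ} (h0 : P w0) (h1 : P w1) (h2 : P w2)
    (h3 : P w3) (m : ℕ) : P (perWeight w0 w1 w2 w3 m) := by
  unfold perWeight
  split_ifs <;> assumption

/-- A window of `4 * q + r` consecutive integers contains `q` full periods. -/
lemma perWeight_sum (w0 w1 w2 w3 : ℝ) (q r n : ℕ) (h : 4 * q + r ≤ n + 1) :
    ∑ i ∈ Finset.range (4 * q + r), perWeight w0 w1 w2 w3 (n - i)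
      = q * (w0 + w1 + w2 + w3) + ∑ i ∈ Finset.range r, perWeight w0 w1 w2 w3 (n - i) := by
  have hper : ∀ i, i < r → perWeight w0 w1 w2 w3 (n - (4 * q + i)) =
      perWeight w0 w1 w2 w3 (n - i) := by
    intro i hi
    unfold perWeight
    rw [show (n - (4 * q + i)) % 4 = (n - i) % 4 by omega]
  rw [Finset.sum_range_add, Finset.sum_congr rfl (fun i hi => hper i (Finset.mem_range.1 hi))]
  congr 1
  clear hper
  induction q with
  | zero => simp
  | succ q ih =>
    rw [show 4 * (q + 1) = 4 * q + 4 by ring, Finset.sum_range_add, ih (by omega)]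
    simp only [Finset.sum_range_succ, Finset.sum_range_zero]
    obtain ⟨k, hk⟩ : ∃ k, n = k + 4 * q + 3 := ⟨n - 4 * q - 3, by omega⟩
    rw [show n - (4 * q + 0) = k + 3 by omega, show n - (4 * q + 1) = k + 2 by omega,
      show n - (4 * q + 2) = k + 1 by omega, show n - (4 * q + 3) = k by omega]
    have : k % 4 = 0 ∨ k % 4 = 1 ∨ k % 4 = 2 ∨ k % 4 = 3 := by omega
    push_cast
    rcases this with h | h | h | h <;> simp [perWeight, Nat.add_mod, h] <;> ring

/-- Reduction of the weight inequality for `s = 2 * (4 * q + r)` to the residues of `m / 2`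
modulo four. -/
lemma perWeight_ineq {w0 w1 w2 w3 lam : ℝ} {s q r : ℕ} (hsq : s = 2 * (4 * q + r))
    (he : ∀ n : ℕ, 3 ≤ n → lam * perWeight w0 w1 w2 w3 (2 * n) ≤ 2 * (q * (w0 + w1 + w2 + w3)
      + ∑ i ∈ Finset.range (r + 1), perWeight w0 w1 w2 w3 (n - i)))
    (ho : ∀ n : ℕ, 3 ≤ n → lam * perWeight w0 w1 w2 w3 (2 * n + 1) ≤
      2 * (q * (w0 + w1 + w2 + w3) + ∑ i ∈ Finset.range r, perWeight w0 w1 w2 w3 (n - i))) :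
    ∀ m, 12 + s ≤ m → lam * perWeight w0 w1 w2 w3 m ≤
      2 * ∑ i ∈ Finset.range (numFolds s m), perWeight w0 w1 w2 w3 (m / 2 - i) := by
  intro m hm
  rcases Nat.even_or_odd' m with ⟨n, rfl | rfl⟩
  · rw [show numFolds s (2 * n) = 4 * q + (r + 1) by unfold numFolds; omega,
      show 2 * n / 2 = n by omega, perWeight_sum _ _ _ _ _ _ _ (by omega)]
    exact he n (by omega)
  · rw [show numFolds s (2 * n + 1) = 4 * q + r by unfold numFolds; omega,
      show (2 * n + 1) / 2 = n by omega, perWeight_sum _ _ _ _ _ _ _ (by omega)]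
    exact ho n (by omega)

/-- `s ≡ 0 (mod 8)`. Odd `m` share one weight; the eigenvector of the three-state system for the
classes `0`, `2` modulo 4 and the odd numbers is scaled to have polynomial entries in `x`. -/
lemma lower_bound_mod_zero {a s q : ℕ} (ha : 2 ≤ a) (hsq : s = 2 * (4 * q + 0)) (hs : 2 ≤ s)
    {x : ℝ} (h4 : 4 ≤ x) (hx : x ≤ s + 1)
    (hP : x ^ 3 - (s : ℝ) * x ^ 2 - (s : ℝ) * x - (s : ℝ) = 0) (m : ℕ) (hm : 6 ≤ m) :
    1 / 32 * (s : ℝ) ^ (-(Real.logb 2 ((s : ℝ) + 1)) - 3) * (m : ℝ) ^ (Real.logb 2 x)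
      ≤ (f (a ^ m) (a ^ s) : ℝ) := by
  refine f_lower_bound ha hs (by linarith) hx (U := 2 * x ^ 2)
    (w := perWeight (x ^ 2 + 2 * x + 4) (x ^ 2) (x ^ 2 + 2 * x) (x ^ 2)) (by positivity)
    (perWeight_cases (P := fun y => y ≤ 2 * x ^ 2) ?_ ?_ ?_ ?_)
    (perWeight_cases (P := fun y => 2 * x ^ 2 ≤ 4 * y) ?_ ?_ ?_ ?_)
    (perWeight_ineq hsq ?_ ?_) m hm
  iterate 8 nlinarith
  all_goals
    intro n hn
    obtain ⟨k, rfl⟩ : ∃ k, n = k + 3 := ⟨n - 3, by omega⟩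
    have hs' : (s : ℝ) = 2 * (4 * q + 0) := by exact_mod_cast hsq
    rw [hs'] at hP
    have : k % 4 = 0 ∨ k % 4 = 1 ∨ k % 4 = 2 ∨ k % 4 = 3 := by omega
    rcases this with h | h | h | h <;>
      simp [perWeight, Finset.sum_range_succ, Nat.add_mod, Nat.mul_mod, h] <;> nlinarith

/-- `s ≡ 2 (mod 8)`. Even `m` share one weight, and the odd classes `1`, `3` modulo 4 are
separated; the weight is least on the class `3`. -/
lemma lower_bound_mod_two {a s q : ℕ} (ha : 2 ≤ a) (hsq : s = 2 * (4 * q + 1)) (hs : 2 ≤ s)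
    {x : ℝ} (h4 : 4 ≤ x) (hx : x ≤ s + 1)
    (hP : x ^ 3 - ((s : ℝ) + 2) * x ^ 2 + ((s : ℝ) + 2) * x - ((s : ℝ) - 2) = 0)
    (m : ℕ) (hm : 6 ≤ m) :
    1 / 32 * (s : ℝ) ^ (-(Real.logb 2 ((s : ℝ) + 1)) - 3) * (m : ℝ) ^ (Real.logb 2 x)
      ≤ (f (a ^ m) (a ^ s) : ℝ) := by
  refine f_lower_bound ha hs (by linarith) hx (U := 2 * x ^ 2)
    (w := perWeight (x ^ 2) (x ^ 2 - 2 * x + 4) (x ^ 2) (x ^ 2 - 2 * x)) (by positivity)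
    (perWeight_cases (P := fun y => y ≤ 2 * x ^ 2) ?_ ?_ ?_ ?_)
    (perWeight_cases (P := fun y => 2 * x ^ 2 ≤ 4 * y) ?_ ?_ ?_ ?_)
    (perWeight_ineq hsq ?_ ?_) m hm
  iterate 8 nlinarith
  all_goals
    intro n hn
    obtain ⟨k, rfl⟩ : ∃ k, n = k + 3 := ⟨n - 3, by omega⟩
    have hs' : (s : ℝ) = 2 * (4 * q + 1) := by exact_mod_cast hsq
    rw [hs'] at hP
    have : k % 4 = 0 ∨ k % 4 = 1 ∨ k % 4 = 2 ∨ k % 4 = 3 := by omega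
    rcases this with h | h | h | h <;>
      simp [perWeight, Finset.sum_range_succ, Nat.add_mod, Nat.mul_mod, h] <;> nlinarith

/-- `s ≡ 4 (mod 8)`, including `s = 4`. Odd `m` share one weight, and the even classes `0`, `2`
modulo 4 are separated. -/
lemma lower_bound_mod_four {a s q : ℕ} (ha : 2 ≤ a) (hsq : s = 2 * (4 * q + 2)) (hs : 2 ≤ s)
    {x : ℝ} (h4 : 4 ≤ x) (hx : x ≤ s + 1)
    (hP : x ^ 3 - ((s : ℝ) + 2) * x ^ 2 + (s : ℝ) * x + ((s : ℝ) + 4) = 0)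
    (m : ℕ) (hm : 6 ≤ m) :
    1 / 32 * (s : ℝ) ^ (-(Real.logb 2 ((s : ℝ) + 1)) - 3) * (m : ℝ) ^ (Real.logb 2 x)
      ≤ (f (a ^ m) (a ^ s) : ℝ) := by
  refine f_lower_bound ha hs (by linarith) hx (U := 2 * x ^ 2)
    (w := perWeight (x ^ 2) (x ^ 2 - 2 * x) (x ^ 2 - 4) (x ^ 2 - 2 * x)) (by positivity)
    (perWeight_cases (P := fun y => y ≤ 2 * x ^ 2) ?_ ?_ ?_ ?_)
    (perWeight_cases (P := fun y => 2 * x ^ 2 ≤ 4 * y) ?_ ?_ ?_ ?_)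
    (perWeight_ineq hsq ?_ ?_) m hm
  iterate 8 nlinarith
  all_goals
    intro n hn
    obtain ⟨k, rfl⟩ : ∃ k, n = k + 3 := ⟨n - 3, by omega⟩
    have hs' : (s : ℝ) = 2 * (4 * q + 2) := by exact_mod_cast hsq
    rw [hs'] at hP
    have : k % 4 = 0 ∨ k % 4 = 1 ∨ k % 4 = 2 ∨ k % 4 = 3 := by omega
    rcases this with h | h | h | h <;>
      simp [perWeight, Finset.sum_range_succ, Nat.add_mod, Nat.mul_mod, h] <;> nlinarith

/-- `s ≡ 6 (mod 8)`. Even `m` share one weight, and the odd classes `1`, `3` modulo 4 are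
separated; the weight is least on the class `3`. -/
lemma lower_bound_mod_six {a s q : ℕ} (ha : 2 ≤ a) (hsq : s = 2 * (4 * q + 3)) (hs : 2 ≤ s)
    {x : ℝ} (h4 : 4 ≤ x) (hx : x ≤ s + 1)
    (hP : x ^ 3 - (s : ℝ) * x ^ 2 - ((s : ℝ) + 2) * x + ((s : ℝ) + 2) = 0)
    (m : ℕ) (hm : 6 ≤ m) :
    1 / 32 * (s : ℝ) ^ (-(Real.logb 2 ((s : ℝ) + 1)) - 3) * (m : ℝ) ^ (Real.logb 2 x)
      ≤ (f (a ^ m) (a ^ s) : ℝ) := by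
  refine f_lower_bound ha hs (by linarith) hx (U := 2 * x ^ 2)
    (w := perWeight (x ^ 2 + 2 * x) (x ^ 2) (x ^ 2 + 2 * x) (x ^ 2 - 4)) (by positivity)
    (perWeight_cases (P := fun y => y ≤ 2 * x ^ 2) ?_ ?_ ?_ ?_)
    (perWeight_cases (P := fun y => 2 * x ^ 2 ≤ 4 * y) ?_ ?_ ?_ ?_)
    (perWeight_ineq hsq ?_ ?_) m hm
  iterate 8 nlinarith
  all_goals
    intro n hn
    obtain ⟨k, rfl⟩ : ∃ k, n = k + 3 := ⟨n - 3, by omega⟩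
    have hs' : (s : ℝ) = 2 * (4 * q + 3) := by exact_mod_cast hsq
    rw [hs'] at hP
    have : k % 4 = 0 ∨ k % 4 = 1 ∨ k % 4 = 2 ∨ k % 4 = 3 := by omega
    rcases this with h | h | h | h <;>
      simp [perWeight, Finset.sum_range_succ, Nat.add_mod, Nat.mul_mod, h] <;> nlinarith

/-- When `s` is odd every `m` has `(s + 1) / 2` admissible exponents, and constant weights work. -/
lemma lower_bound_odd {a s : ℕ} (ha : 2 ≤ a) (hs : 2 ≤ s) (hodd : s % 2 = 1)
    (m : ℕ) (hm : 6 ≤ m) :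
    1 / 32 * (s : ℝ) ^ (-(Real.logb 2 ((s : ℝ) + 1)) - 3)
      * (m : ℝ) ^ (Real.logb 2 ((s : ℝ) + 1)) ≤ (f (a ^ m) (a ^ s) : ℝ) := by
  have hs0 : (0 : ℝ) ≤ s := Nat.cast_nonneg s
  refine f_lower_bound ha hs (by linarith) le_rfl (U := 1) (w := fun _ => 1) one_pos
    (fun _ => le_rfl) (fun _ => by norm_num) (fun n _ => ?_) m hm
  have h : s + 1 ≤ 2 * numFolds s n := by unfold numFolds; omega
  have h' : (s + 1 : ℝ) ≤ 2 * numFolds s n := by exact_mod_cast h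
  simpa using h'

lemma lower_bound_two {a : ℕ} (ha : 2 ≤ a) (m : ℕ) (hm : 6 ≤ m) :
    1 / 32 * ((2 : ℕ) : ℝ) ^ (-(Real.logb 2 (((2 : ℕ) : ℝ) + 1)) - 3)
      * (m : ℝ) ^ (Real.logb 2 2) ≤ (f (a ^ m) (a ^ 2) : ℝ) := by
  refine f_lower_bound ha le_rfl (by norm_num) (by norm_num) (U := 1) (w := fun _ => 1) one_pos
    (fun _ => le_rfl) (fun _ => by norm_num) (fun n _ => ?_) m hm
  have h : 2 ≤ 2 * numFolds 2 n := by unfold numFolds; omega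
  have h' : (2 : ℝ) ≤ 2 * numFolds 2 n := by exact_mod_cast h
  simpa using h'

/-- Locating a greatest root between a point where the function is non-positive and one beyond
which it is positive. -/
lemma greatestRoot_bounds {p : ℝ → ℝ} {lam u v : ℝ} (hc : Continuous p)
    (h : IsGreatestRoot p lam) (huv : u ≤ v) (hu : p u ≤ 0) (hv : ∀ x, v < x → 0 < p x) :
    u ≤ lam ∧ lam ≤ v := by
  constructor
  · have hv1 : 0 ≤ p (v + 1) := (hv _ (by linarith)).le
    obtain ⟨y, hy, hy0⟩ := intermediate_value_Icc (by linarith : u ≤ v + 1) hc.continuousOn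
      (Set.mem_Icc.2 ⟨hu, hv1⟩)
    exact hy.1.trans (h.2 y hy0)
  · by_contra hlt
    exact absurd h.1 (hv lam (not_le.1 hlt)).ne'

theorem theorem1 :
    ∃ c : ℝ, 0 < c ∧
      ∀ a s : ℕ, 2 ≤ a → 2 ≤ s →
        ∀ lam : ℝ, IsGreatestRoot (Ps s) lam →
          ∃ M : ℕ, ∀ m : ℕ, M ≤ m →
            c * (s : ℝ) ^ (-(Real.logb 2 ((s : ℝ) + 1)) - 3) *
                (m : ℝ) ^ (Real.logb 2 lam) ≤ (f (a ^ m) (a ^ s) : ℝ) := by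
  refine ⟨1 / 32, by norm_num, fun a s ha hs lam hlam => ⟨6, fun m hm => ?_⟩⟩
  by_cases hodd : s % 2 = 1
  · have h0 := hlam.1
    rw [Ps, if_pos hodd] at h0
    obtain rfl : lam = s + 1 := by linarith
    exact lower_bound_odd ha hs hodd m hm
  by_cases h2 : s = 2
  · subst h2
    have h0 := hlam.1
    simp only [Ps] at h0
    norm_num at h0
    obtain rfl : lam = 2 := by linarith
    exact lower_bound_two ha m hm
  by_cases h4 : s = 4
  · subst h4
    have hPs : Ps 4 = fun x => x ^ 2 - 4 * x - 4 := by
      funext x; simp [Ps]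
    rw [hPs] at hlam
    obtain ⟨hl, hu⟩ := greatestRoot_bounds (u := 4) (v := 5) (by fun_prop) hlam (by norm_num)
      (by norm_num) (fun x hx => by nlinarith)
    have h0 : lam ^ 2 - 4 * lam - 4 = 0 := hlam.1
    -- the cubic for residue 4 modulo 8 factors as `(x - 2) * (x ^ 2 - 4 * x - 4)` at `s = 4`
    refine lower_bound_mod_four (q := 0) ha rfl (by norm_num) hl (by norm_num; linarith) ?_ m hm
    push_cast
    linear_combination (lam - 2) * h0
  have hs6 : (6 : ℝ) ≤ s := by
    have : 6 ≤ s := by omega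
    exact_mod_cast this
  by_cases h80 : s % 8 = 0
  · have hPs : Ps s = fun x => x ^ 3 - (s : ℝ) * x ^ 2 - (s : ℝ) * x - (s : ℝ) := by
      funext x; simp [Ps, hodd, h2, h4, h80]
    rw [hPs] at hlam
    obtain ⟨hl, hu⟩ := greatestRoot_bounds (u := 4) (v := s + 1) (by fun_prop) hlam
      (by linarith) (by norm_num; linarith)
      (fun x hx => by
        obtain ⟨t, ht, rfl⟩ : ∃ t : ℝ, 0 < t ∧ x = s + 1 + t := ⟨x - s - 1, by linarith, by ring⟩
        ring_nf; positivity)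
    exact lower_bound_mod_zero (q := s / 8) ha (by omega) hs hl hu hlam.1 m hm
  by_cases h82 : s % 8 = 2
  · have hPs : Ps s = fun x => x ^ 3 - ((s : ℝ) + 2) * x ^ 2 + ((s : ℝ) + 2) * x
        - ((s : ℝ) - 2) := by
      funext x; simp [Ps, hodd, h2, h4, h82]
    rw [hPs] at hlam
    obtain ⟨hl, hu⟩ := greatestRoot_bounds (u := 4) (v := s + 1) (by fun_prop) hlam
      (by linarith) (by norm_num; linarith)
      (fun x hx => by
        obtain ⟨t, ht, rfl⟩ : ∃ t : ℝ, 0 < t ∧ x = s + 1 + t := ⟨x - s - 1, by linarith, by ring⟩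
        ring_nf; nlinarith [mul_pos ht ht, mul_pos ht (mul_pos ht ht)])
    exact lower_bound_mod_two (q := s / 8) ha (by omega) hs hl hu hlam.1 m hm
  by_cases h84 : s % 8 = 4
  · have hPs : Ps s = fun x => x ^ 3 - ((s : ℝ) + 2) * x ^ 2 + (s : ℝ) * x + ((s : ℝ) + 4) := by
      funext x; simp [Ps, hodd, h2, h4, h84]
    rw [hPs] at hlam
    obtain ⟨hl, hu⟩ := greatestRoot_bounds (u := 4) (v := s + 1) (by fun_prop) hlam
      (by linarith) (by norm_num; linarith)
      (fun x hx => by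
        obtain ⟨t, ht, rfl⟩ : ∃ t : ℝ, 0 < t ∧ x = s + 1 + t := ⟨x - s - 1, by linarith, by ring⟩
        ring_nf; nlinarith [mul_pos ht ht, mul_pos ht (mul_pos ht ht)])
    exact lower_bound_mod_four (q := s / 8) ha (by omega) hs hl hu hlam.1 m hm
  · have hPs : Ps s = fun x => x ^ 3 - (s : ℝ) * x ^ 2 - ((s : ℝ) + 2) * x + ((s : ℝ) + 2) := by
      funext x; simp [Ps, hodd, h2, h4, h80, h82, h84]
    rw [hPs] at hlam
    obtain ⟨hl, hu⟩ := greatestRoot_bounds (u := 4) (v := s + 1) (by fun_prop) hlam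
      (by linarith) (by norm_num; linarith)
      (fun x hx => by
        obtain ⟨t, ht, rfl⟩ : ∃ t : ℝ, 0 < t ∧ x = s + 1 + t := ⟨x - s - 1, by linarith, by ring⟩
        ring_nf; nlinarith [mul_pos ht ht, mul_pos ht (mul_pos ht ht)])
    exact lower_bound_mod_six (q := s / 8) ha (by omega) hs hl hu hlam.1 m hm
end

section
/- There exists s₀ such that for every even integer s ≥ s₀: if s ≡ 0 (mod 8) then the largest real root λ₁ of x³ − s·x² − s·x − s satisfies s + 1 − 1/s² < λ₁ < s + 1; and if s ≡ 6 (mod 8) then the largest real root λ₄ of x³ − s·x² − (s+2)x + (s+2) satisfies s + 1 − 1/s² < λ₄ < s + 1. -/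
/-- The common estimate: `c` is the only parameter in which the Taylor expansions at `s + 1` of
the two cubics differ. -/
lemma greatestRoot_bounds_s5 {f : ℝ → ℝ} {s c lam : ℝ} (hs : 3 ≤ s) (hc : 1 ≤ c)
    (hf : ∀ x, f x = (x - (s + 1)) ^ 3 + (2 * s + 3) * (x - (s + 1)) ^ 2
      + (s ^ 2 + 3 * s + c) * (x - (s + 1)) + 1)
    (h : IsGreatestRoot f lam) :
    s + 1 - 1 / s ^ 2 < lam ∧ lam < s + 1 := by
  obtain ⟨h0, hmax⟩ := h
  have hs0 : 0 < s := by linarith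
  constructor
  · obtain ⟨e, he⟩ : ∃ e, e = 1 / s ^ 2 := ⟨_, rfl⟩
    rw [← he]
    have he0 : 0 < e := by rw [he]; positivity
    have hes : e * s ^ 2 = 1 := by rw [he]; field_simp
    have he1 : e ≤ 1 := by nlinarith
    have hneg : f (s + 1 - e) < 0 := by
      have hval : f (s + 1 - e) = -(e * ((3 * s + c) - (2 * s + 3) * e + e ^ 2)) := by
        rw [hf]; linear_combination -hes
      have hfac : 0 < (3 * s + c) - (2 * s + 3) * e + e ^ 2 := by
        nlinarith [sq_pos_of_pos he0, mul_nonneg (by linarith : 0 ≤ 2 * s + 3) (sub_nonneg.2 he1)]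
      rw [hval]
      exact neg_neg_of_pos (mul_pos he0 hfac)
    have hpos : 0 < f (s + 1) := by rw [hf]; norm_num
    have hcont : Continuous f := by
      rw [funext hf]; fun_prop
    obtain ⟨x, hx, hx0⟩ := intermediate_value_Ioo (by linarith : s + 1 - e ≤ s + 1)
      hcont.continuousOn ⟨hneg, hpos⟩
    exact hx.1.trans_le (hmax x hx0)
  · by_contra! hle
    have ht : 0 ≤ lam - (s + 1) := by linarith
    have hpos : 0 < f lam := by rw [hf]; positivity
    exact hpos.ne' h0

theorem root_estimates_cases_0_and_6 :
    ∃ s₀ : ℤ, ∀ s : ℤ, s₀ ≤ s → s % 2 = 0 →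
      (s % 8 = 0 →
        ∀ lam : ℝ,
          IsGreatestRoot (fun x : ℝ =>
            x ^ 3 - (s : ℝ) * x ^ 2 - (s : ℝ) * x - (s : ℝ)) lam →
          (s : ℝ) + 1 - 1 / (s : ℝ) ^ 2 < lam ∧ lam < (s : ℝ) + 1) ∧
      (s % 8 = 6 →
        ∀ lam : ℝ,
          IsGreatestRoot (fun x : ℝ =>
            x ^ 3 - (s : ℝ) * x ^ 2 - ((s : ℝ) + 2) * x + ((s : ℝ) + 2)) lam →
          (s : ℝ) + 1 - 1 / (s : ℝ) ^ 2 < lam ∧ lam < (s : ℝ) + 1) := by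
  refine ⟨3, fun s hs _ => ?_⟩
  have hs' : (3 : ℝ) ≤ s := by exact_mod_cast hs
  exact ⟨fun _ lam h => greatestRoot_bounds_s5 (c := 3) hs' (by norm_num) (fun x => by ring) h,
    fun _ lam h => greatestRoot_bounds_s5 (c := 1) hs' le_rfl (fun x => by ring) h⟩
end

section
/- There exists s₀ such that for every integer s ≥ s₀ with s ≡ 4 (mod 8), the largest real root λ₃ of the polynomial x³ − (s+2)x² + s·x + (s+4) satisfies s + 1 − 3/s² + 3/s³ − 9/s⁴ < λ₃ < s + 1 − 3/s² + 3/s³ − 6/s⁴. -/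
/-- The cubic in the rescaled coordinate `g`, where `x = s + 1 + t² g` and `t = 1/s`. -/
lemma cubic_rescaled (s t g : ℝ) (h : s * t = 1) :
    (s + 1 + t ^ 2 * g) ^ 3 - (s + 2) * (s + 1 + t ^ 2 * g) ^ 2 + s * (s + 1 + t ^ 2 * g) + (s + 4)
      = 3 + (1 + t - t ^ 2) * g + (2 + t) * t ^ 3 * g ^ 2 + t ^ 6 * g ^ 3 := by
  linear_combination ((s * t + 1) * g + t * g + 2 * t ^ 3 * g ^ 2) * h

lemma rescaled_lower_neg (t : ℝ) (h0 : 0 < t) (h1 : t ≤ 1 / 100) :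
    3 + (1 + t - t ^ 2) * (-3 + 3 * t - 9 * t ^ 2) + (2 + t) * t ^ 3 * (-3 + 3 * t - 9 * t ^ 2) ^ 2
      + t ^ 6 * (-3 + 3 * t - 9 * t ^ 2) ^ 3 < 0 := by
  obtain ⟨g, hg⟩ : ∃ g, g = -3 + 3 * t - 9 * t ^ 2 := ⟨_, rfl⟩
  have hg1 : -3 ≤ g := by nlinarith
  have hg2 : g ≤ 0 := by nlinarith
  have hsq : g ^ 2 ≤ 9 := by nlinarith
  have hcube : g ^ 3 ≤ 0 := by nlinarith [sq_nonneg g]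
  have e : 3 + (1 + t - t ^ 2) * g = t ^ 2 * (-3 - 12 * t + 9 * t ^ 2) := by rw [hg]; ring
  rw [← hg, e]
  have a : (2 + t) * t ^ 3 * g ^ 2 ≤ (2 + t) * t ^ 3 * 9 := by gcongr
  have b : t ^ 6 * g ^ 3 ≤ 0 := mul_nonpos_of_nonneg_of_nonpos (by positivity) hcube
  have c : t ^ 2 * (-3 + 6 * t + 18 * t ^ 2) < 0 :=
    mul_neg_of_pos_of_neg (by positivity) (by nlinarith)
  nlinarith

lemma rescaled_upper_pos (t : ℝ) (h0 : 0 < t) (h1 : t ≤ 1 / 100) :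
    0 < 3 + (1 + t - t ^ 2) * (-3 + 3 * t - 6 * t ^ 2)
      + (2 + t) * t ^ 3 * (-3 + 3 * t - 6 * t ^ 2) ^ 2
      + t ^ 6 * (-3 + 3 * t - 6 * t ^ 2) ^ 3 := by
  obtain ⟨g, hg⟩ : ∃ g, g = -3 + 3 * t - 6 * t ^ 2 := ⟨_, rfl⟩
  have hg1 : -3 ≤ g := by nlinarith
  have hg2 : g ≤ -2.9 := by nlinarith
  have hsq : 8 ≤ g ^ 2 := by nlinarith
  have hcube : -27 ≤ g ^ 3 := by nlinarith [sq_nonneg g]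
  have e : 3 + (1 + t - t ^ 2) * g + (2 + t) * t ^ 3 * g ^ 2 + t ^ 6 * g ^ 3
      = t ^ 3 * (-9 + 6 * t + (2 + t) * g ^ 2 + t ^ 3 * g ^ 3) := by
    have : 3 + (1 + t - t ^ 2) * g = t ^ 3 * (-9 + 6 * t) := by rw [hg]; ring
    rw [this]; ring
  rw [← hg, e]
  have ht3 : t ^ 3 ≤ (1 / 100) ^ 3 := by gcongr
  have ht3' : 0 < t ^ 3 := by positivity
  apply mul_pos ht3'
  nlinarith

theorem root_estimate_case_4 :
    ∃ s₀ : ℤ, ∀ s : ℤ, s₀ ≤ s → s % 8 = 4 →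
      ∀ lam : ℝ,
        IsGreatestRoot (fun x : ℝ =>
          x ^ 3 - ((s : ℝ) + 2) * x ^ 2 + (s : ℝ) * x + ((s : ℝ) + 4)) lam →
        (s : ℝ) + 1 - 3 / (s : ℝ) ^ 2 + 3 / (s : ℝ) ^ 3 - 9 / (s : ℝ) ^ 4 < lam ∧
          lam < (s : ℝ) + 1 - 3 / (s : ℝ) ^ 2 + 3 / (s : ℝ) ^ 3 - 6 / (s : ℝ) ^ 4 := by
  refine ⟨100, fun s hs _ lam hlam => ?_⟩
  obtain ⟨hroot, hmax⟩ := hlam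
  have hS : (100 : ℝ) ≤ s := by exact_mod_cast hs
  generalize (s : ℝ) = S at *
  have hS0 : 0 < S := by linarith
  obtain ⟨t, ht⟩ : ∃ t, t = 1 / S := ⟨_, rfl⟩
  have hst : S * t = 1 := by rw [ht]; field_simp
  have h0 : 0 < t := by rw [ht]; positivity
  have h1 : t ≤ 1 / 100 := by rw [ht]; gcongr
  have el : S + 1 - 3 / S ^ 2 + 3 / S ^ 3 - 9 / S ^ 4
      = S + 1 + t ^ 2 * (-3 + 3 * t - 9 * t ^ 2) := by rw [ht]; field_simp; ring
  have eu : S + 1 - 3 / S ^ 2 + 3 / S ^ 3 - 6 / S ^ 4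
      = S + 1 + t ^ 2 * (-3 + 3 * t - 6 * t ^ 2) := by rw [ht]; field_simp; ring
  have hl := rescaled_lower_neg t h0 h1
  have hu := rescaled_upper_pos t h0 h1
  rw [← cubic_rescaled S t _ hst, ← el] at hl
  rw [← cubic_rescaled S t _ hst, ← eu] at hu
  have ht2 : t ^ 2 ≤ (1 / 100) ^ 2 := by gcongr
  have hle : S + 1 - 3 / S ^ 2 + 3 / S ^ 3 - 9 / S ^ 4 ≤ S + 1 := by
    rw [el]
    have : t ^ 2 * (-3 + 3 * t - 9 * t ^ 2) ≤ 0 :=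
      mul_nonpos_of_nonneg_of_nonpos (by positivity) (by nlinarith)
    linarith
  have hus : S ≤ S + 1 - 3 / S ^ 2 + 3 / S ^ 3 - 6 / S ^ 4 := by
    rw [eu]
    have : t ^ 2 * (-4) ≤ t ^ 2 * (-3 + 3 * t - 6 * t ^ 2) := by gcongr; nlinarith
    linarith
  constructor
  · generalize S + 1 - 3 / S ^ 2 + 3 / S ^ 3 - 9 / S ^ 4 = a at *
    have hc : ContinuousOn (fun x : ℝ => x ^ 3 - (S + 2) * x ^ 2 + S * x + (S + 4))
        (Set.Icc a (S + 1)) := by fun_prop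
    obtain ⟨x, hx, hx0⟩ := intermediate_value_Ioo hle hc
      (show (0 : ℝ) ∈ Set.Ioo _ _ from ⟨hl, by ring_nf; norm_num⟩)
    exact hx.1.trans_le (hmax x hx0)
  · generalize S + 1 - 3 / S ^ 2 + 3 / S ^ 3 - 6 / S ^ 4 = b at *
    by_contra! hb
    simp only at hroot
    -- The divided difference `(p lam - p b) / (lam - b)` is nonnegative.
    have hd : 0 ≤ lam ^ 2 + lam * b + b ^ 2 - (S + 2) * (lam + b) + S := by
      nlinarith [mul_nonneg (sub_nonneg.2 hus) (sub_nonneg.2 (hus.trans hb)),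
        mul_nonneg (sub_nonneg.2 hus) hS0.le,
        mul_nonneg (sub_nonneg.2 (hus.trans hb)) hS0.le,
        sq_nonneg (lam - S), sq_nonneg (b - S)]
    nlinarith [mul_nonneg (sub_nonneg.2 hb) hd]
end

section
/- There exists s₀ such that for every integer s ≥ s₀, the largest real root of x³ − (s+2)x² + s·x + (s+4) is strictly smaller than each of: the largest real root of x³ − s·x² − s·x − s, the largest real root of x³ − (s+2)x² + (s+2)x − (s−2), the largest real root of x³ − s·x² − (s+2)x + (s+2), and the number s + 1. -/
/-- A sign change on `[a, b]` pushes the largest root of a continuous function beyond `a`. -/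
lemma lt_of_sign_change {p : ℝ → ℝ} {lam a b : ℝ} (hp : Continuous p)
    (h : IsGreatestRoot p lam) (hab : a ≤ b) (ha : p a < 0) (hb : 0 < p b) : a < lam := by
  obtain ⟨x, hx, hx0⟩ := intermediate_value_Ioo hab hp.continuousOn ⟨ha, hb⟩
  exact hx.1.trans_le (h.2 x hx0)

theorem root_comparison :
    ∃ s₀ : ℤ, ∀ s : ℤ, s₀ ≤ s →
      ∀ lam3 lam1 lam2 lam4 : ℝ,
        IsGreatestRoot (fun x : ℝ =>
          x ^ 3 - ((s : ℝ) + 2) * x ^ 2 + (s : ℝ) * x + ((s : ℝ) + 4)) lam3 →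
        IsGreatestRoot (fun x : ℝ =>
          x ^ 3 - (s : ℝ) * x ^ 2 - (s : ℝ) * x - (s : ℝ)) lam1 →
        IsGreatestRoot (fun x : ℝ =>
          x ^ 3 - ((s : ℝ) + 2) * x ^ 2 + ((s : ℝ) + 2) * x - ((s : ℝ) - 2)) lam2 →
        IsGreatestRoot (fun x : ℝ =>
          x ^ 3 - (s : ℝ) * x ^ 2 - ((s : ℝ) + 2) * x + ((s : ℝ) + 2)) lam4 →
        lam3 < lam1 ∧ lam3 < lam2 ∧ lam3 < lam4 ∧ lam3 < (s : ℝ) + 1 := by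
  refine ⟨3, fun s hs lam3 lam1 lam2 lam4 h3 h1 h2 h4 => ?_⟩
  have hs' : (3 : ℝ) ≤ s := by exact_mod_cast hs
  generalize (s : ℝ) = r at *
  have e3 := h3.1
  simp only at e3
  have hlow : 3 < lam3 := by
    refine lt_of_sign_change (b := r + 1) (by fun_prop) h3 (by linarith) ?_ ?_
    · linarith
    · ring_nf
      norm_num
  have hup : lam3 < r + 1 := by
    by_contra! hle
    obtain ⟨t, ht, rfl⟩ : ∃ t, 0 ≤ t ∧ lam3 = r + 1 + t := ⟨lam3 - (r + 1), by linarith, by ring⟩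
    -- Taylor expansion of the cubic at `r + 1`; its coefficients are all nonnegative.
    have key : t ^ 3 + (2 * r + 1) * t ^ 2 + (r ^ 2 + r - 1) * t + 3 = 0 := by
      linear_combination e3
    have c1 : 0 ≤ r ^ 2 + r - 1 := by nlinarith
    have c2 : 0 ≤ 2 * r + 1 := by linarith
    have : 0 ≤ t ^ 3 + (2 * r + 1) * t ^ 2 + (r ^ 2 + r - 1) * t := by positivity
    linarith
  refine ⟨?_, ?_, ?_, hup⟩
  · refine lt_of_sign_change (b := r + 1) (by fun_prop) h1 hup.le ?_ ?_
    · nlinarith [mul_pos (sub_pos.2 hup) (sub_pos.2 hlow)]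
    · ring_nf
      norm_num
  · refine lt_of_sign_change (b := r + 1) (by fun_prop) h2 hup.le ?_ ?_
    · linarith
    · ring_nf
      norm_num
  · refine lt_of_sign_change (b := r + 1) (by fun_prop) h4 hup.le ?_ ?_
    · nlinarith [mul_pos (sub_pos.2 hup) (sub_pos.2 hlow)]
    · ring_nf
      norm_num
end

section
/- Let A = [[2,1,1],[2,0,1],[1,1,1]], let λ be the largest real eigenvalue of the matrix 2A, let B = A⁵ + [[0,1,−1],[0,1,−1],[0,1,−1]], and let μ be the largest real eigenvalue of B. Then 2·μ^{1/5} − λ > 0.0000756. -/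
/-!
The characteristic polynomials are `x³ - 6x² - 8x + 8` for `2A` and `x³ - 518x² - 245x - 56`
for `B`. The first is positive beyond `6.98173`, so `λ ≤ 6.98173`. The second changes sign on
`[518.47, 519]`, so `μ ≥ 518.47`. Since `3.490903⁵ < 518.47`, this gives
`2 μ^{1/5} - λ ≥ 6.981806 - 6.98173 = 0.000076`.
-/

/-- Evaluation of the characteristic polynomial of a `3 × 3` matrix as the determinant of
`x • 1 - M`, expanded in the entries. -/
lemma charpoly_isRoot_fin_three (M : Matrix (Fin 3) (Fin 3) ℝ) (x : ℝ) :
    M.charpoly.IsRoot x ↔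
      (x - M 0 0) * (x - M 1 1) * (x - M 2 2) - (x - M 0 0) * M 1 2 * M 2 1
        - M 0 1 * M 1 0 * (x - M 2 2) - M 0 1 * M 1 2 * M 2 0
        - M 0 2 * M 1 0 * M 2 1 - M 0 2 * (x - M 1 1) * M 2 0 = 0 := by
  rw [Polynomial.IsRoot.def, Matrix.eval_charpoly, Matrix.det_fin_three]
  simp only [Matrix.sub_apply, Matrix.scalar_apply, Matrix.diagonal_apply]
  simp
  ring_nf

theorem eigenvalue_comparison
    (A : Matrix (Fin 3) (Fin 3) ℝ) (hA : A = !![2, 1, 1; 2, 0, 1; 1, 1, 1])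
    (B : Matrix (Fin 3) (Fin 3) ℝ)
    (hB : B = A ^ 5 + !![0, 1, -1; 0, 1, -1; 0, 1, -1])
    (lam : ℝ) (hlamroot : ((2 : ℝ) • A).charpoly.IsRoot lam)
    (hlammax : ∀ x : ℝ, ((2 : ℝ) • A).charpoly.IsRoot x → x ≤ lam)
    (μ : ℝ) (hμroot : B.charpoly.IsRoot μ)
    (hμmax : ∀ x : ℝ, B.charpoly.IsRoot x → x ≤ μ) :
    2 * μ ^ ((1 : ℝ) / 5) - lam > 0.0000756 := by
  have hB' : B = !![293, 134, 170; 228, 104, 132; 209, 96, 121] := by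
    rw [hB, hA]
    ext i j
    fin_cases i <;> fin_cases j <;>
      norm_num [pow_succ, Matrix.mul_apply, Fin.sum_univ_three]
  have hrootB : ∀ x : ℝ, x ^ 3 - 518 * x ^ 2 - 245 * x - 56 = 0 → B.charpoly.IsRoot x := by
    intro x hx
    rw [charpoly_isRoot_fin_three, hB']
    simp
    linear_combination hx
  have hlam : lam ^ 3 - 6 * lam ^ 2 - 8 * lam + 8 = 0 := by
    rw [charpoly_isRoot_fin_three, hA] at hlamroot
    simp at hlamroot
    linear_combination hlamroot
  have hlam_le : lam ≤ 6.98173 := by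
    by_contra! h
    -- With `t = lam - 6.98173 > 0` the cubic has positive coefficients in `t`.
    obtain ⟨t, ht, rfl⟩ : ∃ t : ℝ, 0 < t ∧ lam = 6.98173 + t :=
      ⟨lam - 6.98173, by linarith, by ring⟩
    have h2 := pow_pos ht 2
    have h3 := pow_pos ht 3
    ring_nf at hlam
    linarith
  have hμ_ge : (518.47 : ℝ) ≤ μ := by
    have hcont : ContinuousOn (fun x : ℝ => x ^ 3 - 518 * x ^ 2 - 245 * x - 56)
        (Set.Icc 518.47 519) := by fun_prop
    obtain ⟨x, hx, hx0⟩ := intermediate_value_Icc (by norm_num) hcont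
      (show (0 : ℝ) ∈ Set.Icc _ _ by constructor <;> norm_num)
    exact hx.1.trans (hμmax x (hrootB x hx0))
  have hr : (3.490903 : ℝ) ≤ μ ^ ((1 : ℝ) / 5) := by
    rw [one_div, Real.le_rpow_inv_iff_of_pos (by norm_num) (by linarith) (by norm_num)]
    refine le_trans ?_ hμ_ge
    norm_num
  norm_num at *
  linarith
end

section
/- Let b ≥ 2 be an integer and let u = (u₁,…,uₙ) be a finite sequence of positive integers with uₙ ≥ 2. Set w = (u₁,…,uₙ₋₁, uₙ − 1, 1, b − 1, uₙ, uₙ₋₁,…,u₁) and w' = (u₁,…,uₙ₋₁, uₙ − 1, uₙ + 1, uₙ₋₁,…,u₁). Then ⟨w⟩ = b·⟨u⟩² and ⟨w'⟩ = ⟨u⟩². -/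
/-- The product of the matrices `[[a, 1], [1, 0]]` over the entries `a` of the list. -/
def continuantMatrix (l : List ℕ) : Matrix (Fin 2) (Fin 2) ℕ :=
  (l.map fun a => !![a, 1; 1, 0]).prod

theorem continuantMatrix_nil : continuantMatrix [] = 1 := rfl

theorem continuantMatrix_cons (a : ℕ) (l : List ℕ) :
    continuantMatrix (a :: l) = !![a, 1; 1, 0] * continuantMatrix l := by
  simp [continuantMatrix]

theorem continuantMatrix_append (l m : List ℕ) :
    continuantMatrix (l ++ m) = continuantMatrix l * continuantMatrix m := by
  simp [continuantMatrix]

theorem continuantMatrix_reverse (l : List ℕ) :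
    continuantMatrix l.reverse = (continuantMatrix l).transpose := by
  induction l with
  | nil => simp [continuantMatrix_nil]
  | cons a l ih =>
    rw [List.reverse_cons, continuantMatrix_append, ih, continuantMatrix_cons a l,
      Matrix.transpose_mul, continuantMatrix_cons, continuantMatrix_nil, mul_one]
    congr 1
    ext i j
    fin_cases i <;> fin_cases j <;> rfl

theorem continuant_eq (l : List ℕ) : continuant l = continuantMatrix l 0 0 := by
  induction l using continuant.induct with
  | case1 => simp [continuant, continuantMatrix_nil]
  | case2 a => simp [continuant, continuantMatrix_cons, continuantMatrix_nil]
  | case3 a b t ih1 ih2 =>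
    rw [continuant, ih1, ih2, continuantMatrix_cons a]
    simp [continuantMatrix_cons b, Matrix.mul_apply, Matrix.vecMul, dotProduct, Fin.sum_univ_two]

theorem niederreiter_doubling (b : ℕ) (hb : 2 ≤ b)
    (v : List ℕ) (x : ℕ) (hx : 2 ≤ x) (hpos : ∀ y ∈ v ++ [x], 0 < y) :
    continuant (v ++ [x - 1, 1, b - 1] ++ (v ++ [x]).reverse) =
      b * (continuant (v ++ [x])) ^ 2 ∧
    continuant (v ++ [x - 1, x + 1] ++ v.reverse) =
      (continuant (v ++ [x])) ^ 2 := by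
  -- Writing `x = y + 1` and `b = c + 1` removes the truncated subtractions.
  obtain ⟨y, rfl⟩ : ∃ y, x = y + 1 := ⟨x - 1, by omega⟩
  obtain ⟨c, rfl⟩ : ∃ c, b = c + 1 := ⟨b - 1, by omega⟩
  simp only [continuant_eq, continuantMatrix_append, continuantMatrix_reverse,
    continuantMatrix_cons, continuantMatrix_nil, Nat.add_sub_cancel, Matrix.transpose_mul]
  constructor <;>
  · simp [Matrix.mul_apply, Fin.sum_univ_two]
    ring
end

section
/- Let a ≥ 2, s ≥ 1, m > s be integers, let r be an integer with 0 ≤ r ≤ s and r ≡ m (mod 2), and let u = (u₁,…,uₙ) be a finite sequence of positive integers with uₙ ≥ 2 and ⟨u⟩ = a^{(m−r)/2}. Then: if r ≥ 1, both ⟨u₁,…,uₙ, a^r − 1, 1, uₙ − 1, uₙ₋₁,…,u₁⟩ = a^m and ⟨u₁,…,uₙ₋₁, uₙ − 1, 1, a^r − 1, uₙ,…,u₁⟩ = a^m; and if r = 0, both ⟨u₁,…,uₙ₋₁, uₙ + 1, uₙ − 1, uₙ₋₁,…,u₁⟩ = a^m and ⟨u₁,…,uₙ₋₁, uₙ − 1,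 uₙ + 1, uₙ₋₁,…,u₁⟩ = a^m. -/
/-- The continuant of a list with its last entry removed, with value `0` on the empty list. -/
def continuantInit : List ℕ → ℕ
  | [] => 0
  | [_] => 1
  | a :: b :: t => a * continuantInit (b :: t) + continuantInit t

theorem continuant_append_cons (v : List ℕ) (y : ℕ) (w : List ℕ) :
    continuant (v ++ y :: w) =
      continuant v * continuant (y :: w) + continuantInit v * continuant w := by
  induction v using continuant.induct with
  | case1 => simp [continuant, continuantInit]
  | case2 a => simp [continuant, continuantInit]
  | case3 a b t ih1 ih2 =>
    simp only [List.cons_append, continuant, continuantInit] at ih1 ih2 ⊢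
    rw [ih1, ih2]
    ring

theorem continuant_append_pair (v : List ℕ) (x y : ℕ) :
    continuant (v ++ [x, y]) = y * continuant (v ++ [x]) + continuant v := by
  simp only [continuant_append_cons, continuant]
  ring

theorem continuant_reverse (v : List ℕ) : continuant v.reverse = continuant v := by
  induction v using continuant.induct with
  | case1 => rfl
  | case2 a => rfl
  | case3 a b t ih1 ih2 =>
    have h : (a :: b :: t).reverse = t.reverse ++ [b, a] := by simp
    rw [List.reverse_cons] at ih1
    rw [h, continuant_append_pair, ih1, ih2, continuant]

theorem continuant_cons_reverse (y : ℕ) (v : List ℕ) :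
    continuant (y :: v.reverse) = y * continuant v + continuantInit v := by
  have h : y :: v.reverse = (v ++ [y]).reverse := by simp
  rw [h, continuant_reverse, continuant_append_cons]
  simp only [continuant]
  ring

/-- The case `r ≥ 1`, with `x = z + 1` and `a ^ r = B + 1` to avoid truncated subtraction. -/
theorem continuant_fold_s15 (v : List ℕ) (z B : ℕ) :
    continuant (v ++ (z + 1) :: B :: 1 :: z :: v.reverse) =
      (B + 1) * continuant (v ++ [z + 1]) ^ 2 := by
  simp only [continuant_append_cons, continuant_cons_reverse, continuant_reverse, continuant]
  ring

/-- The case `r = 0`, with `x = z + 1`. -/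
theorem continuant_fold_zero (v : List ℕ) (z : ℕ) :
    continuant (v ++ (z + 2) :: z :: v.reverse) = continuant (v ++ [z + 1]) ^ 2 := by
  simp only [continuant_append_cons, continuant_cons_reverse, continuant_reverse, continuant]
  ring

theorem lemma2_construction (a s m r : ℕ) (ha : 2 ≤ a) (hs : 1 ≤ s) (hm : s < m)
    (hrs : r ≤ s) (hpar : r % 2 = m % 2)
    (v : List ℕ) (x : ℕ) (hx : 2 ≤ x) (hpos : ∀ y ∈ v ++ [x], 0 < y)
    (hcont : continuant (v ++ [x]) = a ^ ((m - r) / 2)) :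
    (1 ≤ r →
      continuant ((v ++ [x]) ++ [a ^ r - 1, 1, x - 1] ++ v.reverse) = a ^ m ∧
      continuant (v ++ [x - 1, 1, a ^ r - 1] ++ (v ++ [x]).reverse) = a ^ m) ∧
    (r = 0 →
      continuant (v ++ [x + 1, x - 1] ++ v.reverse) = a ^ m ∧
      continuant (v ++ [x - 1, x + 1] ++ v.reverse) = a ^ m) := by
  have hpow : a ^ r * (a ^ ((m - r) / 2)) ^ 2 = a ^ m := by
    rw [← pow_mul, ← pow_add]
    congr 1
    omega
  obtain ⟨z, rfl⟩ : ∃ z, x = z + 1 := ⟨x - 1, by omega⟩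
  constructor
  · intro _
    have hA : a ^ r - 1 + 1 = a ^ r := Nat.sub_add_cancel (Nat.pow_pos (by omega))
    have key := continuant_fold_s15 v z (a ^ r - 1)
    rw [hA, hcont, hpow] at key
    refine ⟨by simpa using key, ?_⟩
    rw [← continuant_reverse]
    simpa using key
  · rintro rfl
    have key := continuant_fold_zero v z
    rw [pow_zero, one_mul] at hpow
    rw [hcont, hpow] at key
    refine ⟨by simpa using key, ?_⟩
    rw [← continuant_reverse]
    simpa using key
end

section
/- Let M be a 3×3 real matrix all of whose entries are nonnegative, and let λ > 0 be a real eigenvalue of M (i.e. there exists a nonzero vector x ∈ ℝ³ with M·x = λ·x). Then for every natural number n there exist indices i, j such that the (i,j) entry of Mⁿ is at least λⁿ/3. -/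
/-!
The vector `x` is an eigenvector of `M ^ n` for `lam ^ n`. Take the row `i` at which `|x i|` is
maximal, hence positive. As `M ^ n` has nonnegative entries,
`lam ^ n * |x i| ≤ ∑ j, (M ^ n) i j * |x j| ≤ (∑ j, (M ^ n) i j) * |x i|`,
so the three entries of row `i` sum to at least `lam ^ n` and one of them is at least `lam ^ n / 3`.
-/

theorem matrix_power_entry_lower_bound (M : Matrix (Fin 3) (Fin 3) ℝ)
    (hM : ∀ i j, 0 ≤ M i j) (lam : ℝ) (hlam : 0 < lam)
    (heig : ∃ x : Fin 3 → ℝ, x ≠ 0 ∧ M.mulVec x = lam • x) :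
    ∀ n : ℕ, ∃ i j : Fin 3, lam ^ n / 3 ≤ (M ^ n) i j := by
  obtain ⟨x, hx0, hx⟩ := heig
  intro n
  have hpow : (M ^ n).mulVec x = lam ^ n • x := by
    induction n with
    | zero => simp
    | succ k ih =>
      rw [pow_succ, ← Matrix.mulVec_mulVec, hx, Matrix.mulVec_smul, ih, smul_smul, pow_succ,
        mul_comm]
  have hnn : ∀ i j, 0 ≤ (M ^ n) i j := by
    clear hpow
    induction n with
    | zero =>
      intro i j
      rw [pow_zero, Matrix.one_apply]
      split_ifs <;> norm_num
    | succ k ih =>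
      intro i j
      rw [pow_succ, Matrix.mul_apply]
      exact Finset.sum_nonneg fun l _ => mul_nonneg (ih i l) (hM l j)
  obtain ⟨i, hi⟩ := Finite.exists_max fun j => |x j|
  have hpos : 0 < |x i| := by
    obtain ⟨k, hk⟩ := Function.ne_iff.mp hx0
    exact (abs_pos.mpr hk).trans_le (hi k)
  have hrow : lam ^ n * |x i| ≤ (∑ j, (M ^ n) i j) * |x i| := by
    have h : ∑ j, (M ^ n) i j * x j = lam ^ n * x i := congrFun hpow i
    calc lam ^ n * |x i| = |∑ j, (M ^ n) i j * x j| := by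
          rw [h, abs_mul, abs_of_pos (pow_pos hlam n)]
      _ ≤ ∑ j, |(M ^ n) i j * x j| := Finset.abs_sum_le_sum_abs _ _
      _ ≤ ∑ j, (M ^ n) i j * |x i| := by
          refine Finset.sum_le_sum fun j _ => ?_
          rw [abs_mul, abs_of_nonneg (hnn i j)]
          exact mul_le_mul_of_nonneg_left (hi j) (hnn i j)
      _ = (∑ j, (M ^ n) i j) * |x i| := (Finset.sum_mul _ _ _).symm
  have hsum := le_of_mul_le_mul_right hrow hpos
  rw [Fin.sum_univ_three] at hsum
  by_contra! hlt
  linarith [hlt i 0, hlt i 1, hlt i 2]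
end

section
/- Let s ≥ 3 be an odd integer and let g : ℕ → ℝ be any function satisfying g(k) = 1 for all 2 ≤ k ≤ s + 2 and g(m) = 2·Σ_{k = ⌊(m−s+1)/2⌋}^{⌊m/2⌋} g(k) for all m ≥ s + 3. Then for every m > 5s + 5, g(m) ≤ m^{log₂(s+1)}. -/
/-!
Put `α = log₂ (s + 1)`, so that `2 ^ α = s + 1`. The bound `g m ≤ m ^ α` holds for every `m ≥ 2`, by
strong induction. For `m ≤ s + 2` it reads `1 ≤ m ^ α`. For `m ≥ s + 3`, since `s` is odd, the
recursion sums exactly `(s + 1) / 2` values `g k`, each with `2 ≤ k ≤ m / 2`, so that `g k ≤ (m / 2) ^ α`;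
hence `g m ≤ (s + 1) * (m / 2) ^ α = m ^ α`.
-/

theorem upper_bound_odd_case (s : ℕ) (hs : 3 ≤ s) (hodd : s % 2 = 1)
    (g : ℕ → ℝ)
    (hinit : ∀ k, 2 ≤ k → k ≤ s + 2 → g k = 1)
    (hrec : ∀ m, s + 3 ≤ m →
      g m = 2 * ∑ k ∈ Finset.Icc ((m - s + 1) / 2) (m / 2), g k) :
    ∀ m : ℕ, 5 * s + 5 < m → g m ≤ (m : ℝ) ^ (Real.logb 2 ((s : ℝ) + 1)) := by
  set α := Real.logb 2 ((s : ℝ) + 1) with hα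
  have hs0 : (0 : ℝ) ≤ s := Nat.cast_nonneg s
  have hα0 : 0 ≤ α := Real.logb_nonneg (by norm_num) (by linarith)
  have h2α : (2 : ℝ) ^ α = s + 1 :=
    Real.rpow_logb (by norm_num) (by norm_num) (by linarith)
  have key : ∀ m : ℕ, 2 ≤ m → g m ≤ (m : ℝ) ^ α := by
    intro m
    induction m using Nat.strong_induction_on with
    | _ m ih =>
      intro hm
      rcases Nat.lt_or_ge m (s + 3) with h | h
      · rw [hinit m hm (by omega)]
        exact Real.one_le_rpow (by exact_mod_cast (by omega : 1 ≤ m)) hα0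
      · have hterm : ∀ k ∈ Finset.Icc ((m - s + 1) / 2) (m / 2), g k ≤ ((m : ℝ) / 2) ^ α := by
          intro k hk
          rw [Finset.mem_Icc] at hk
          refine (ih k (by omega) (by omega)).trans ?_
          refine Real.rpow_le_rpow (Nat.cast_nonneg k) ?_ hα0
          have h2 : ((k * 2 : ℕ) : ℝ) ≤ m := by exact_mod_cast (by omega : k * 2 ≤ m)
          push_cast at h2
          linarith
        have hsum := Finset.sum_le_card_nsmul _ _ _ hterm
        -- The oddness of `s` gives the same number of terms for both parities of `m`.
        have hcard : 2 * (Finset.Icc ((m - s + 1) / 2) (m / 2)).card = s + 1 := by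
          rw [Nat.card_Icc]
          omega
        have hcard' : 2 * ((Finset.Icc ((m - s + 1) / 2) (m / 2)).card : ℝ) = s + 1 := by
          exact_mod_cast hcard
        rw [nsmul_eq_mul] at hsum
        calc g m = 2 * ∑ k ∈ Finset.Icc ((m - s + 1) / 2) (m / 2), g k := hrec m h
          _ ≤ 2 * (((Finset.Icc ((m - s + 1) / 2) (m / 2)).card : ℝ) * ((m : ℝ) / 2) ^ α) := by
            linarith
          _ = (2 : ℝ) ^ α * ((m : ℝ) / 2) ^ α := by rw [← mul_assoc, hcard', h2α]
          _ = (m : ℝ) ^ α := by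
            rw [← Real.mul_rpow (by norm_num) (by positivity)]
            congr 1
            ring
  intro m hm
  exact key m (by omega)
end
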